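/- Let M be a Malcev algebra over F lying in the variety H, containing L = sl2(F), and such that mL ≠ 0 for every nonzero m ∈ M. Let U be the F-span in End_F(M) of the maps α(y,a,b) : x ↦ p(x,y,a,b) := −{ab,x,y} − {yb,a,x} + {xb,y,a} with y ∈ M and a,b ∈ L. Then U is contained in the centroid Γ(M), U is closed under composition, any two elements of U commute (so U is a commutative associative F-algebra), N_M = L·U (the span of all aα with a ∈ L, α ∈ U), and the linear map sl2(F) ⊗_F U → N_M sending a ⊗ α to aα is an isomorphism of F-algebras, where sl2(F) ⊗_F U carries the product (a⊗α)(b⊗β) = ab ⊗ αβ. In other words, N_M ≅ sl2(F) ⊗_F U. -/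

import Mathlib

section
variable {K : Type*} [Field K] {M : Type*} [AddCommGroup M] [Module K M]

/-- the Jacobian `J(x,y,z) = (xy)z + (yz)x + (zx)y` -/
def mjac (μ : M →ₗ[K] M →ₗ[K] M) (x y z : M) : M :=
  μ (μ x y) z + μ (μ y z) x + μ (μ z x) y

/-- `{x,y,z} = (xy)z − (xz)y + 2·x(yz)` -/
def mbr (μ : M →ₗ[K] M →ₗ[K] M) (x y z : M) : M :=
  μ (μ x y) z - μ (μ x z) y + (2 : K) • μ x (μ y z)

/-- `h(y,z,t,x,u) = {yz,t,u}x + {yz,t,x}u + {yx,z,u}t + {yu,z,x}t` -/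
def mh (μ : M →ₗ[K] M →ₗ[K] M) (y z t x u : M) : M :=
  μ (mbr μ (μ y z) t u) x + μ (mbr μ (μ y z) t x) u +
    μ (mbr μ (μ y x) z u) t + μ (mbr μ (μ y u) z x) t

/-- A Malcev algebra structure: anticommutative (`x·x = 0`) together with the Malcev
identity `(xz)(yt) = ((xy)z)t + ((yz)t)x + ((zt)x)y + ((tx)y)z`. -/
def IsMalcev (μ : M →ₗ[K] M →ₗ[K] M) : Prop :=
  (∀ x, μ x x = 0) ∧
    ∀ x y z t, μ (μ x z) (μ y t) =
      μ (μ (μ x y) z) t + μ (μ (μ y z) t) x + μ (μ (μ z t) x) y + μ (μ (μ t x) y) z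

/-- the variety 𝓗 : `h(y,z,t,x,u) = 0` identically -/
def InVarietyH (μ : M →ₗ[K] M →ₗ[K] M) : Prop := ∀ y z t x u, mh μ y z t x u = 0

/-- `N_M = {m | J(m,a,b) = 0 ∀ a,b ∈ L}` -/
def NMset (μ : M →ₗ[K] M →ₗ[K] M) (L : Submodule K M) : Set M :=
  {m : M | ∀ a ∈ L, ∀ b ∈ L, mjac μ m a b = 0}

/-- `J_M = {m | {m,a,b} = 0 ∀ a,b ∈ L}` -/
def JMset (μ : M →ₗ[K] M →ₗ[K] M) (L : Submodule K M) : Set M :=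
  {m : M | ∀ a ∈ L, ∀ b ∈ L, mbr μ m a b = 0}

/-- the centroid Γ(M): linear operators commuting with all multiplications -/
def centroid (μ : M →ₗ[K] M →ₗ[K] M) : Set (Module.End K M) :=
  {α | ∀ x y : M, α (μ x y) = μ x (α y) ∧ α (μ x y) = μ (α x) y}

/-- `p(x,y,z,t) = −{zt,x,y} − {yt,z,x} + {xt,y,z}` -/
def pfun (μ : M →ₗ[K] M →ₗ[K] M) (x y z t : M) : M :=
  -(mbr μ (μ z t) x y) - mbr μ (μ y t) z x + mbr μ (μ x t) y z

/-- `U`: the span of the operators `α(y,a,b) : x ↦ p(x,y,a,b)` with `y ∈ M`, `a,b ∈ L` -/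
def Uspan (μ : M →ₗ[K] M →ₗ[K] M) (L : Submodule K M) : Submodule K (Module.End K M) :=
  Submodule.span K {φ : Module.End K M | ∃ y : M, ∃ a ∈ L, ∃ b ∈ L, ∀ x, φ x = pfun μ x y a b}

/-- the linear operator `m ↦ J(m,a,b)` -/
def jop (μ : M →ₗ[K] M →ₗ[K] M) (a b : M) : M →ₗ[K] M :=
  μ.flip b ∘ₗ μ.flip a + μ (μ a b) + μ.flip a ∘ₗ μ b

/-- `N_M` as a submodule (intersection of the kernels of `m ↦ J(m,a,b)`, `a,b ∈ L`) -/
def NMker (μ : M →ₗ[K] M →ₗ[K] M) (L : Submodule K M) : Submodule K M :=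
  ⨅ (a : M) (_ : a ∈ L) (b : M) (_ : b ∈ L), LinearMap.ker (jop μ a b)

open scoped TensorProduct

/-!
In every Malcev algebra the defect `p(xw,y,z,t) - p(x,y,z,t)w` is a signed sum of three values of
`h`, so in the variety `𝓗` the operators `α(y,a,b) : x ↦ p(x,y,a,b)` lie in the centroid. Since
`αβ` and `βα` agree on products, faithfulness of the action of `L` makes the centroid commutative,
and `β α(y,a,b) = α(βy,a,b)` for `β` in the centroid makes `U` closed under composition.

Centroid elements carry `L` into `N_M`. Conversely, `N_M` is a Lie module for `L` by Sagle's formula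
for `J(xy,a,b)`, and on it `p(x,m,a,b) = -3((mx)(ab) + (mb)(ax) + (ma)(xb))`. For `sl₂` this gives
`p(E,m,F,H) + p(H,m,E,F) + p(F,m,H,E) = 3m`, where the summands are elements of `L·U`. Finally, if
`αE + βH + γF = 0` with centroid coefficients, multiplying twice by `E` kills `γ` and multiplying
twice by `F` kills `α`, so `L ⊗ U → N_M` is injective.
-/

section Malcev

variable {μ : M →ₗ[K] M →ₗ[K] M}

theorem mjac_cyclic (x y z : M) : mjac μ x y z = mjac μ y z x := by
  simp only [mjac]
  abel

namespace IsMalcev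

theorem anticomm (hM : IsMalcev μ) (x y : M) : μ x y = -μ y x :=
  (LinearMap.IsAlt.neg hM.1 y x).symm

theorem mbr_eq (hM : IsMalcev μ) (x y z : M) :
    mbr μ x y z = mjac μ x y z + (3 : K) • μ x (μ y z) := by
  simp only [mbr, mjac, hM.anticomm (μ y z) x, hM.anticomm z x, map_neg, LinearMap.neg_apply]
  module

theorem mjac_mul (hM : IsMalcev μ) (x y a b : M) :
    mjac μ (μ x y) a b =
      μ (mjac μ x a b) y + μ x (mjac μ y a b) - (2 : K) • mjac μ x y (μ a b) := by
  have h₁ := hM.2 y b x a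
  have h₂ := hM.2 b y x a
  have h₃ := hM.2 x y b a
  have anti := hM.anticomm
  simp only [mjac, map_add, LinearMap.add_apply, two_smul]
  grind

theorem mul_mul_add_mul_mul (hM : IsMalcev μ) (x y z t : M) :
    μ (μ x y) (μ z t) + μ (μ x t) (μ z y) =
      μ (μ (μ x z) y) t - μ (μ (μ x y) z) t + μ (μ (μ x z) t) y - μ (μ (μ x t) z) y -
        μ x (μ (μ z y) t) - μ x (μ (μ z t) y) := by
  have h₁ := hM.2 x z y t
  have h₂ := hM.2 x z t y
  have anti := hM.anticomm
  grind

theorem pfun_mul (hM : IsMalcev μ) (x w y z t : M) :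
    pfun μ (μ x w) y z t =
      μ (pfun μ x y z t) w - mh μ t w y x z + mh μ y z w x t + mh μ x t z w y := by
  -- Modulo anticommutativity the claim is a linear combination of these seven identities.
  have m₁ := hM.2 (μ x w) y t z
  have m₂ := hM.2 (μ x w) z y t
  have m₃ := hM.2 (μ x w) t z y
  have s₁ := hM.mul_mul_add_mul_mul (μ t w) x y z
  have s₂ := hM.mul_mul_add_mul_mul (μ x y) z t w
  have s₃ := hM.mul_mul_add_mul_mul (μ z t) w x y
  have s₄ := hM.mul_mul_add_mul_mul (μ y z) t w x
  have anti := hM.anticomm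
  simp only [pfun, mh, mbr, map_add, map_sub, map_neg, LinearMap.add_apply,
    LinearMap.sub_apply, LinearMap.neg_apply, two_smul]
  grind

end IsMalcev

end Malcev

section Centroid

/-- The centroid of `M` as a subspace of `End_K(M)`, so that it can be compared with `Uspan`. -/
def centroidSubmodule (μ : M →ₗ[K] M →ₗ[K] M) : Submodule K (Module.End K M) where
  carrier := centroid μ
  zero_mem' x y := by simp
  add_mem' {α β} hα hβ x y := by
    simp only [LinearMap.add_apply, map_add]
    exact ⟨by rw [(hα x y).1, (hβ x y).1], by rw [(hα x y).2, (hβ x y).2]⟩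
  smul_mem' c α hα x y := by
    simp only [LinearMap.smul_apply, map_smul]
    exact ⟨by rw [(hα x y).1], by rw [(hα x y).2]⟩

variable {μ : M →ₗ[K] M →ₗ[K] M} {α β : Module.End K M} {L : Submodule K M}

theorem mul_apply_apply_of_mem_centroid (hα : α ∈ centroid μ) (hβ : β ∈ centroid μ) (x y : M) :
    μ (α x) (β y) = (α * β) (μ x y) := by
  rw [Module.End.mul_apply, (hβ x y).1, (hα x (β y)).2]

theorem mjac_apply_of_mem_centroid (hα : α ∈ centroid μ) (x y z : M) :
    mjac μ (α x) y z = α (mjac μ x y z) := by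
  simp only [mjac, map_add, (hα (μ x y) z).2, (hα x y).2, (hα (μ y z) x).1, (hα (μ z x) y).2,
    (hα z x).1]

theorem apply_pfun_of_mem_centroid (hα : α ∈ centroid μ) (x y a b : M) :
    α (pfun μ x y a b) = pfun μ x (α y) a b := by
  have left (x y) : μ (α x) y = α (μ x y) := ((hα x y).2).symm
  have right (x y) : μ x (α y) = α (μ x y) := ((hα x y).1).symm
  simp only [pfun, mbr, left, right, map_add, map_sub, map_neg, map_smul]

theorem eq_of_forall_mul_eq (hfaith : ∀ m : M, m ≠ 0 → ∃ a ∈ L, μ m a ≠ 0) {m n : M}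
    (h : ∀ a ∈ L, μ m a = μ n a) : m = n := by
  by_contra hmn
  obtain ⟨a, ha, hne⟩ := hfaith (m - n) (sub_ne_zero.2 hmn)
  exact hne (by rw [map_sub, LinearMap.sub_apply, h a ha, sub_self])

theorem mul_comm_of_mem_centroid (hfaith : ∀ m : M, m ≠ 0 → ∃ a ∈ L, μ m a ≠ 0)
    (hα : α ∈ centroid μ) (hβ : β ∈ centroid μ) : α * β = β * α := by
  ext m
  refine eq_of_forall_mul_eq hfaith fun a _ => ?_
  calc μ (α (β m)) a = α (β (μ m a)) := by rw [← (hα _ a).2, ← (hβ m a).2]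
    _ = μ (α m) (β a) := (mul_apply_apply_of_mem_centroid hα hβ m a).symm
    _ = μ (β (α m)) a := by rw [← (hβ _ a).1, (hβ _ a).2]

theorem eq_zero_of_mem_centroid (hfaith : ∀ m : M, m ≠ 0 → ∃ a ∈ L, μ m a ≠ 0)
    (hα : α ∈ centroid μ) (h : ∀ a ∈ L, α a = 0) : α = 0 := by
  ext m
  refine eq_of_forall_mul_eq hfaith fun a ha => ?_
  rw [← (hα m a).2, (hα m a).1, h a ha, map_zero, LinearMap.zero_apply, map_zero,
    LinearMap.zero_apply]

end Centroid

section Operators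

/-- The operator `α(y,a,b) : x ↦ p(x,y,a,b)`; for `a, b ∈ L` these are the generators of
`Uspan μ L`. -/
def pEnd (μ : M →ₗ[K] M →ₗ[K] M) (y a b : M) : Module.End K M where
  toFun x := pfun μ x y a b
  map_add' x x' := by
    simp only [pfun, mbr, map_add, LinearMap.add_apply]
    module
  map_smul' c x := by
    simp only [pfun, mbr, map_smul, LinearMap.smul_apply, RingHom.id_apply]
    module

variable {μ : M →ₗ[K] M →ₗ[K] M} {L : Submodule K M}

theorem pEnd_mem_Uspan (y : M) {a b : M} (ha : a ∈ L) (hb : b ∈ L) :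
    pEnd μ y a b ∈ Uspan μ L :=
  Submodule.subset_span ⟨y, a, ha, b, hb, fun _ => rfl⟩

theorem pEnd_mem_centroid (hM : IsMalcev μ) (hH : InVarietyH μ) (y a b : M) :
    pEnd μ y a b ∈ centroid μ := by
  have left (u v : M) : pEnd μ y a b (μ u v) = μ (pEnd μ y a b u) v := by
    have h := hM.pfun_mul u v y a b
    rwa [hH, hH, hH, sub_zero, add_zero, add_zero] at h
  refine fun u v => ⟨?_, left u v⟩
  rw [hM.anticomm u v, map_neg, left v u, hM.anticomm u]

theorem Uspan_le_centroidSubmodule (hM : IsMalcev μ) (hH : InVarietyH μ) :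
    Uspan μ L ≤ centroidSubmodule μ := by
  refine Submodule.span_le.2 ?_
  rintro φ ⟨y, a, -, b, -, hφ⟩
  rw [show φ = pEnd μ y a b from LinearMap.ext hφ]
  exact pEnd_mem_centroid hM hH y a b

theorem mul_mem_Uspan {α β : Module.End K M} (hα : α ∈ centroid μ) (hβ : β ∈ Uspan μ L) :
    α * β ∈ Uspan μ L := by
  suffices Uspan μ L ≤ (Uspan μ L).comap (LinearMap.mulLeft K α) from this hβ
  refine Submodule.span_le.2 ?_
  rintro φ ⟨y, a, ha, b, hb, hφ⟩
  refine Submodule.subset_span ⟨α y, a, ha, b, hb, fun x => ?_⟩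
  rw [LinearMap.mulLeft_apply, Module.End.mul_apply, hφ, apply_pfun_of_mem_centroid hα]

end Operators

section LieSubalgebra

/-- `L` is a subalgebra of `M` on which the Jacobian vanishes, i.e. a Lie subalgebra. -/
structure IsLieSubalgebra (μ : M →ₗ[K] M →ₗ[K] M) (L : Submodule K M) : Prop where
  mul_mem : ∀ a ∈ L, ∀ b ∈ L, μ a b ∈ L
  mjac_eq_zero : ∀ a ∈ L, ∀ b ∈ L, ∀ c ∈ L, mjac μ a b c = 0

variable {μ : M →ₗ[K] M →ₗ[K] M} {L : Submodule K M} {m a b x : M}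

theorem mem_NMker : m ∈ NMker μ L ↔ ∀ a ∈ L, ∀ b ∈ L, mjac μ m a b = 0 := by
  simp [NMker, jop, mjac]

theorem apply_mem_NMker (hL : IsLieSubalgebra μ L) {α : Module.End K M} (hα : α ∈ centroid μ)
    (ha : a ∈ L) : α a ∈ NMker μ L :=
  mem_NMker.2 fun b hb c hc => by
    rw [mjac_apply_of_mem_centroid hα, hL.mjac_eq_zero a ha b hb c hc, map_zero]

theorem mul_mul_of_mem_NMker (hM : IsMalcev μ) (hm : m ∈ NMker μ L) (ha : a ∈ L) (hb : b ∈ L) :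
    μ m (μ a b) = μ (μ m a) b - μ (μ m b) a := by
  have h := mem_NMker.1 hm a ha b hb
  rw [mjac, hM.anticomm (μ a b), hM.anticomm b, map_neg, LinearMap.neg_apply] at h
  linear_combination (norm := abel) -h

theorem mul_mem_NMker (hM : IsMalcev μ) (hL : IsLieSubalgebra μ L) (hm : m ∈ NMker μ L)
    (hx : x ∈ L) : μ m x ∈ NMker μ L := by
  refine mem_NMker.2 fun a ha b hb => ?_
  rw [hM.mjac_mul, mem_NMker.1 hm a ha b hb, hL.mjac_eq_zero x hx a ha b hb,
    mem_NMker.1 hm x hx _ (hL.mul_mem a ha b hb)]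
  simp

theorem pfun_of_mem_NMker (hM : IsMalcev μ) (hL : IsLieSubalgebra μ L) (hm : m ∈ NMker μ L)
    (hx : x ∈ L) (ha : a ∈ L) (hb : b ∈ L) :
    pfun μ x m a b =
      -(3 : K) • (μ (μ m x) (μ a b) + μ (μ m b) (μ a x) + μ (μ m a) (μ x b)) := by
  have j₁ : mjac μ (μ a b) x m = 0 := by
    rw [← mjac_cyclic]
    exact mem_NMker.1 hm _ (hL.mul_mem a ha b hb) x hx
  have j₂ : mjac μ (μ m b) a x = 0 :=
    mem_NMker.1 (mul_mem_NMker hM hL hm hb) a ha x hx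
  have j₃ : mjac μ (μ x b) m a = 0 := by
    rw [mjac_cyclic]
    exact mem_NMker.1 hm a ha _ (hL.mul_mem x hx b hb)
  rw [pfun, hM.mbr_eq, hM.mbr_eq, hM.mbr_eq, j₁, j₂, j₃, hM.anticomm (μ a b), hM.anticomm x m,
    hM.anticomm (μ x b), map_neg, LinearMap.neg_apply]
  module

end LieSubalgebra

section Sl2

/-- The multiplication table of `sl₂` in the basis `E, H, F`; linear independence is not part of
it. -/
structure Sl2Relations (μ : M →ₗ[K] M →ₗ[K] M) (E H F : M) : Prop where
  EH : μ E H = E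
  FH : μ F H = -F
  EF : μ E F = (2⁻¹ : K) • H

variable {μ : M →ₗ[K] M →ₗ[K] M} {E H F : M}

namespace Sl2Relations

theorem HE (hM : IsMalcev μ) (T : Sl2Relations μ E H F) : μ H E = -E := by
  rw [hM.anticomm, T.EH]

theorem HF (hM : IsMalcev μ) (T : Sl2Relations μ E H F) : μ H F = F := by
  rw [hM.anticomm, T.FH, neg_neg]

theorem FE (hM : IsMalcev μ) (T : Sl2Relations μ E H F) : μ F E = -(2⁻¹ : K) • H := by
  rw [hM.anticomm, T.EF, neg_smul]

theorem isLieSubalgebra (hM : IsMalcev μ) (T : Sl2Relations μ E H F) :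
    IsLieSubalgebra μ (Submodule.span K {E, H, F}) where
  mul_mem a ha b hb := by
    rw [Submodule.mem_span_triple] at *
    obtain ⟨a₁, a₂, a₃, rfl⟩ := ha
    obtain ⟨b₁, b₂, b₃, rfl⟩ := hb
    refine ⟨a₁ * b₂ - a₂ * b₁, 2⁻¹ * (a₁ * b₃ - a₃ * b₁), a₂ * b₃ - a₃ * b₂, ?_⟩
    simp only [map_add, map_smul, LinearMap.add_apply, LinearMap.smul_apply, T.EH, T.FH, T.EF,
      T.HE hM, T.HF hM, T.FE hM, hM.1]
    module
  mjac_eq_zero a ha b hb c hc := by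
    rw [Submodule.mem_span_triple] at ha hb hc
    obtain ⟨a₁, a₂, a₃, rfl⟩ := ha
    obtain ⟨b₁, b₂, b₃, rfl⟩ := hb
    obtain ⟨c₁, c₂, c₃, rfl⟩ := hc
    simp only [mjac, map_add, map_smul, map_neg, map_zero, LinearMap.add_apply,
      LinearMap.smul_apply, LinearMap.neg_apply, LinearMap.zero_apply, T.EH, T.FH, T.EF, T.HE hM,
      T.HF hM, T.FE hM, hM.1]
    module

section CentroidCombination

variable {α β γ : Module.End K M}

theorem combination_mul_E (hM : IsMalcev μ) (T : Sl2Relations μ E H F) (hα : α ∈ centroid μ)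
    (hβ : β ∈ centroid μ) (hγ : γ ∈ centroid μ) :
    μ (α E + β H + γ F) E = -β E - (2⁻¹ : K) • γ H := by
  simp only [map_add, LinearMap.add_apply, ← (hα E E).2, ← (hβ H E).2, ← (hγ F E).2, hM.1,
    T.HE hM, T.FE hM, map_zero, map_neg, map_smul]
  module

theorem combination_mul_H (hM : IsMalcev μ) (T : Sl2Relations μ E H F) (hα : α ∈ centroid μ)
    (hβ : β ∈ centroid μ) (hγ : γ ∈ centroid μ) :
    μ (α E + β H + γ F) H = α E - γ F := by
  simp only [map_add, LinearMap.add_apply, ← (hα E H).2, ← (hβ H H).2, ← (hγ F H).2, hM.1,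
    T.EH, T.FH, map_zero, map_neg]
  abel

theorem combination_mul_F (hM : IsMalcev μ) (T : Sl2Relations μ E H F) (hα : α ∈ centroid μ)
    (hβ : β ∈ centroid μ) (hγ : γ ∈ centroid μ) :
    μ (α E + β H + γ F) F = (2⁻¹ : K) • α H + β F := by
  simp only [map_add, LinearMap.add_apply, ← (hα E F).2, ← (hβ H F).2, ← (hγ F F).2, hM.1,
    T.EF, T.HF hM, map_zero, map_smul, add_zero]

variable (hfaith : ∀ m : M, m ≠ 0 → ∃ a ∈ Submodule.span K {E, H, F}, μ m a ≠ 0)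
include hfaith

theorem eq_zero_of_apply_H_eq_zero (T : Sl2Relations μ E H F) (hα : α ∈ centroid μ)
    (h : α H = 0) : α = 0 := by
  have hE : α E = 0 := by rw [← T.EH, (hα E H).1, h, map_zero]
  have hF : α F = 0 := by rw [← neg_eq_zero, ← map_neg, ← T.FH, (hα F H).1, h, map_zero]
  have hspan : Submodule.span K {E, H, F} ≤ LinearMap.ker α := by
    rw [Submodule.span_le]
    rintro _ (rfl | rfl | rfl) <;> assumption
  exact eq_zero_of_mem_centroid hfaith hα fun _ ha => hspan ha

theorem eq_zero_of_apply_E_eq_zero (h2 : (2 : K) ≠ 0) (T : Sl2Relations μ E H F)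
    (hα : α ∈ centroid μ) (h : α E = 0) : α = 0 := by
  refine eq_zero_of_apply_H_eq_zero hfaith T hα ?_
  rw [← smul_inv_smul₀ h2 H, ← T.EF, map_smul, (hα E F).2, h, map_zero, LinearMap.zero_apply,
    smul_zero]

theorem eq_zero_of_apply_F_eq_zero (h2 : (2 : K) ≠ 0) (T : Sl2Relations μ E H F)
    (hα : α ∈ centroid μ) (h : α F = 0) : α = 0 := by
  refine eq_zero_of_apply_H_eq_zero hfaith T hα ?_
  rw [← smul_inv_smul₀ h2 H, ← T.EF, map_smul, (hα E F).1, h, map_zero, smul_zero]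

theorem eq_zero_of_combination_eq_zero (h2 : (2 : K) ≠ 0) (hM : IsMalcev μ)
    (T : Sl2Relations μ E H F) (hα : α ∈ centroid μ) (hβ : β ∈ centroid μ)
    (hγ : γ ∈ centroid μ) (h : α E + β H + γ F = 0) : α = 0 ∧ β = 0 ∧ γ = 0 := by
  have hE := combination_mul_E hM T hα hβ hγ
  have hF := combination_mul_F hM T hα hβ hγ
  rw [h, map_zero, LinearMap.zero_apply] at hE hF
  have hγE : (2⁻¹ : K) • γ E = 0 := by
    simpa [← (hβ E E).2, ← (hγ H E).2, hM.1, T.HE hM] using congrArg (μ · E) hE.symm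
  have hαF : (2⁻¹ : K) • α F = 0 := by
    simpa [← (hα H F).2, ← (hβ F F).2, hM.1, T.HF hM] using congrArg (μ · F) hF.symm
  have hα₀ : α = 0 := eq_zero_of_apply_F_eq_zero hfaith h2 T hα
    ((smul_eq_zero_iff_right (inv_ne_zero h2)).1 hαF)
  have hγ₀ : γ = 0 := eq_zero_of_apply_E_eq_zero hfaith h2 T hγ
    ((smul_eq_zero_iff_right (inv_ne_zero h2)).1 hγE)
  refine ⟨hα₀, eq_zero_of_apply_H_eq_zero hfaith T hβ ?_, hγ₀⟩
  simpa [hα₀, hγ₀] using h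

end CentroidCombination

theorem pEnd_add_pEnd_add_pEnd_eq (h2 : (2 : K) ≠ 0) (hM : IsMalcev μ) (hH : InVarietyH μ)
    (T : Sl2Relations μ E H F)
    (hfaith : ∀ m : M, m ≠ 0 → ∃ a ∈ Submodule.span K {E, H, F}, μ m a ≠ 0) {m : M}
    (hm : m ∈ NMker μ (Submodule.span K {E, H, F})) :
    pEnd μ m F H E + pEnd μ m E F H + pEnd μ m H E F = (3 : K) • m := by
  have memE : E ∈ Submodule.span K {E, H, F} := Submodule.subset_span (by simp)
  have memH : H ∈ Submodule.span K {E, H, F} := Submodule.subset_span (by simp)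
  have memF : F ∈ Submodule.span K {E, H, F} := Submodule.subset_span (by simp)
  have hα := pEnd_mem_centroid hM hH m F H
  have hβ := pEnd_mem_centroid hM hH m E F
  have hγ := pEnd_mem_centroid hM hH m H E
  have pEnd_apply {x a b : M} (hx : x ∈ Submodule.span K {E, H, F})
      (ha : a ∈ Submodule.span K {E, H, F}) (hb : b ∈ Submodule.span K {E, H, F}) :
      pEnd μ m a b x = _ := pfun_of_mem_NMker hM (T.isLieSubalgebra hM) hm hx ha hb
  have lieEH := mul_mul_of_mem_NMker hM hm memE memH
  have lieEF := mul_mul_of_mem_NMker hM hm memE memF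
  have lieHF := mul_mul_of_mem_NMker hM hm memH memF
  rw [T.EH] at lieEH
  rw [T.EF, map_smul] at lieEF
  rw [T.HF hM] at lieHF
  refine eq_of_forall_mul_eq hfaith (LinearMap.eqOn_span' ?_)
  rintro x (hx | hx | hx) <;> rw [hx]
  · rw [combination_mul_E hM T hα hβ hγ, pEnd_apply memE memE memF, pEnd_apply memH memH memE]
    simp only [T.EF, T.HE hM, hM.1, map_smul, map_neg, map_zero, LinearMap.smul_apply]
    linear_combination (norm := skip) -(3 : K) • lieEH
    match_scalars <;> field_simp <;> ring
  · rw [combination_mul_H hM T hα hβ hγ, pEnd_apply memE memF memH, pEnd_apply memF memH memE]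
    simp only [T.EH, T.FH, T.HE hM, T.HF hM, T.FE hM, map_smul, map_neg, LinearMap.smul_apply]
    linear_combination (norm := skip) -(6 : K) • lieEF
    match_scalars <;> field_simp <;> ring
  · rw [combination_mul_F hM T hα hβ hγ, pEnd_apply memH memF memH, pEnd_apply memF memE memF]
    simp only [T.FH, T.EF, hM.1, map_smul, map_neg, map_zero,
      LinearMap.smul_apply]
    linear_combination (norm := skip) -(3 : K) • lieHF
    match_scalars <;> field_simp <;> ring

end Sl2Relations

end Sl2

section Action

/-- The linear map `L ⊗ U → M`, `a ⊗ α ↦ aα`, whose image is `L·U`. -/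
def actionMap (L : Submodule K M) (U : Submodule K (Module.End K M)) : L ⊗[K] U →ₗ[K] M :=
  TensorProduct.lift LinearMap.applyₗ ∘ₗ TensorProduct.mapIncl L U

theorem actionMap_tmul (L : Submodule K M) (U : Submodule K (Module.End K M)) (a : L) (α : U) :
    actionMap L U (a ⊗ₜ[K] α) = (α : Module.End K M) (a : M) := rfl

theorem range_actionMap (L : Submodule K M) (U : Submodule K (Module.End K M)) :
    LinearMap.range (actionMap L U) =
      Submodule.span K {m : M | ∃ a ∈ L, ∃ φ ∈ U, m = φ a} := by
  rw [actionMap, ← TensorProduct.map₂_eq_range_lift_comp_mapIncl,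
    Submodule.map₂_eq_span_image2]
  simp only [Set.image2, SetLike.mem_coe, LinearMap.applyₗ_apply_apply, eq_comm]

variable {μ : M →ₗ[K] M →ₗ[K] M} {E H F : M}

theorem range_actionMap_eq_NMker (h2 : (2 : K) ≠ 0) (h3 : (3 : K) ≠ 0) (hM : IsMalcev μ)
    (hH : InVarietyH μ) (T : Sl2Relations μ E H F)
    (hfaith : ∀ m : M, m ≠ 0 → ∃ a ∈ Submodule.span K {E, H, F}, μ m a ≠ 0) :
    LinearMap.range (actionMap (Submodule.span K {E, H, F})
      (Uspan μ (Submodule.span K {E, H, F}))) = NMker μ (Submodule.span K {E, H, F}) := by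
  rw [range_actionMap]
  refine le_antisymm (Submodule.span_le.2 ?_) fun m hm => ?_
  · rintro _ ⟨a, ha, φ, hφ, rfl⟩
    exact apply_mem_NMker (T.isLieSubalgebra hM) (Uspan_le_centroidSubmodule hM hH hφ) ha
  · have memE : E ∈ Submodule.span K {E, H, F} := Submodule.subset_span (by simp)
    have memH : H ∈ Submodule.span K {E, H, F} := Submodule.subset_span (by simp)
    have memF : F ∈ Submodule.span K {E, H, F} := Submodule.subset_span (by simp)
    rw [← Submodule.smul_mem_iff _ h3, ← T.pEnd_add_pEnd_add_pEnd_eq h2 hM hH hfaith hm]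
    refine add_mem (add_mem ?_ ?_) ?_ <;> refine Submodule.subset_span ⟨_, ?_, _, ?_, rfl⟩
    all_goals first | assumption | exact pEnd_mem_Uspan m ‹_› ‹_›

theorem actionMap_injective (h2 : (2 : K) ≠ 0) (hM : IsMalcev μ) (T : Sl2Relations μ E H F)
    (hind : LinearIndependent K ![E, H, F])
    (hfaith : ∀ m : M, m ≠ 0 → ∃ a ∈ Submodule.span K {E, H, F}, μ m a ≠ 0)
    {U : Submodule K (Module.End K M)} (hU : U ≤ centroidSubmodule μ) :
    Function.Injective (actionMap (Submodule.span K {E, H, F}) U) := by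
  rw [injective_iff_map_eq_zero]
  intro t ht
  have hrange : Set.range ![E, H, F] = {E, H, F} := by
    simp only [Matrix.range_cons, Matrix.range_empty, Set.union_empty, Set.singleton_union]
  let b := (Module.Basis.span hind).map (LinearEquiv.ofEq _ _ (congrArg _ hrange))
  obtain ⟨c, rfl⟩ := TensorProduct.eq_repr_basis_left b t
  have hb (i : Fin 3) : (b i : M) = ![E, H, F] i := by simp [b, Module.Basis.span_apply]
  rw [Finsupp.sum_fintype _ _ (by simp), Fin.sum_univ_three] at ht ⊢
  simp only [map_add, actionMap_tmul, hb] at ht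
  obtain ⟨h₀, h₁, h₂⟩ := Sl2Relations.eq_zero_of_combination_eq_zero hfaith h2 hM T
    (hU (c 0).2) (hU (c 1).2) (hU (c 2).2) ht
  simp only [Submodule.coe_eq_zero] at h₀ h₁ h₂
  simp only [h₀, h₁, h₂, TensorProduct.tmul_zero, add_zero]

end Action

/-- Coordinatization of `N_M`: `U ⊆ Γ(M)` is a commutative
associative algebra, `N_M = L·U`, and `N_M ≅ sl₂(F) ⊗ U` as algebras. -/
theorem stmt1
    (h2 : (2 : K) ≠ 0) (h3 : (3 : K) ≠ 0)
    (μ : M →ₗ[K] M →ₗ[K] M) (hMal : IsMalcev μ) (hVarH : InVarietyH μ)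
    (E H F : M) (hind : LinearIndependent K ![E, H, F])
    (hEH : μ E H = E) (hFH : μ F H = -F) (hEF : μ E F = (2⁻¹ : K) • H)
    (L : Submodule K M) (hL : L = Submodule.span K {E, H, F})
    (hfaith : ∀ m : M, m ≠ 0 → ∃ a ∈ L, μ m a ≠ 0) :
    ((Uspan μ L : Set (Module.End K M)) ⊆ centroid μ) ∧
    (∀ α ∈ Uspan μ L, ∀ β ∈ Uspan μ L, α * β ∈ Uspan μ L) ∧
    (∀ α ∈ Uspan μ L, ∀ β ∈ Uspan μ L, α * β = β * α) ∧
    (NMset μ L = (Submodule.span K {m : M | ∃ a ∈ L, ∃ φ ∈ Uspan μ L, m = φ a} : Submodule K M)) ∧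
    (∃ e : (↥L ⊗[K] ↥(Uspan μ L)) ≃ₗ[K] ↥(NMker μ L),
      (∀ (a : ↥L) (α : ↥(Uspan μ L)),
        ((e (a ⊗ₜ[K] α) : ↥(NMker μ L)) : M) = (α : Module.End K M) (a : M)) ∧
      (∀ (a b : ↥L) (α β : ↥(Uspan μ L)) (c : ↥L) (γ : ↥(Uspan μ L)),
        (c : M) = μ (a : M) (b : M) →
        (γ : Module.End K M) = (α : Module.End K M) * (β : Module.End K M) →
        μ ((e (a ⊗ₜ[K] α) : ↥(NMker μ L)) : M) ((e (b ⊗ₜ[K] β) : ↥(NMker μ L)) : M) =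
          ((e (c ⊗ₜ[K] γ) : ↥(NMker μ L)) : M))) := by
  subst hL
  have T : Sl2Relations μ E H F := ⟨hEH, hFH, hEF⟩
  have hU := Uspan_le_centroidSubmodule hMal hVarH (L := Submodule.span K {E, H, F})
  have hrange := range_actionMap_eq_NMker h2 h3 hMal hVarH T hfaith
  refine ⟨hU, fun α hα β hβ => mul_mem_Uspan (hU hα) hβ,
    fun α hα β hβ => mul_comm_of_mem_centroid hfaith (hU hα) (hU hβ), ?_,
    (LinearEquiv.ofInjective _ (actionMap_injective h2 hMal T hind hfaith hU)).trans
      (LinearEquiv.ofEq _ _ hrange), fun _ _ => rfl, ?_⟩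
  · rw [← range_actionMap, hrange]
    exact Set.ext fun m => mem_NMker.symm
  · intro a b α β c γ hc hγ
    change μ ((α : Module.End K M) a) ((β : Module.End K M) b) = (γ : Module.End K M) c
    rw [mul_apply_apply_of_mem_centroid (hU α.2) (hU β.2), hc, hγ]

end
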